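/- Let n ≥ 3, τ > 0 and C₀ > 0. Let σ be a C¹ map from {x ∈ ℝⁿ : |x| ≥ 1} to symmetric n×n real matrices satisfying ‖σ(x)‖ ≤ C₀ |x|^{−τ} and ‖Dσ(x)‖ ≤ C₀ |x|^{−τ−1} for all |x| ≥ 1, and set g(x) = I + σ(x). Let K(y) = y/|y|² be the Kelvin transform with partial derivatives ∂_i K^k(y) = δ_{ik}|y|^{−2} − 2 y_i y_k |y|^{−4}, and for 0 < |y| ≤ 1 define h_{ij}(y) = Σ_{k,l} ∂_i K^k(y) · ∂_j K^l(y) · g_{kl}(K(y)). Then there exists a constant C > 0 such that for all y with 0 < |y| ≤ 1 and all indices i, j, k one has |∂_k h_{ij}(y) + 4 |y|^{−5} (y_k/|y|) δ_{ij}| ≤ C |y|^{τ−5}. -/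

import Mathlib

open scoped BigOperators

/-- The Kelvin transform `K(y) = y / |y|²` on `ℝⁿ \ {0}`. -/
noncomputable def kelvin (n : ℕ) (y : EuclideanSpace ℝ (Fin n)) : EuclideanSpace ℝ (Fin n) :=
  (‖y‖ ^ 2)⁻¹ • y

/-- The partial derivatives of the Kelvin transform:
`∂_i K^k (y) = δ_{ik} |y|^{-2} - 2 y_i y_k |y|^{-4}`. -/
noncomputable def dKelvin (n : ℕ) (y : EuclideanSpace ℝ (Fin n)) (i k : Fin n) : ℝ :=
  (if i = k then (1 : ℝ) else 0) * ‖y‖ ^ (-(2 : ℝ)) - 2 * y i * y k * ‖y‖ ^ (-(4 : ℝ))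

/-- The components of the pulled-back metric
`h_{ij}(y) = Σ_{k,l} ∂_i K^k(y) ∂_j K^l(y) g_{kl}(K(y))`, where
`g_{kl}(x) = δ_{kl} + σ_{kl}(x)`. -/
noncomputable def pulledMetric (n : ℕ) (σ : EuclideanSpace ℝ (Fin n) → Fin n → Fin n → ℝ)
    (y : EuclideanSpace ℝ (Fin n)) (i j : Fin n) : ℝ :=
  ∑ k, ∑ l, dKelvin n y i k * dKelvin n y j l *
    ((if k = l then (1 : ℝ) else 0) + σ (kelvin n y) k l)


/-- The punctured closed unit ball. -/
def pball (n : ℕ) : Set (EuclideanSpace ℝ (Fin n)) :=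
  {z : EuclideanSpace ℝ (Fin n) | 0 < ‖z‖ ∧ ‖z‖ ≤ 1}

/-- Functions of order `a` at the origin, together with their first derivative. -/
def SymB (n : ℕ) {F : Type} [NormedAddCommGroup F] [NormedSpace ℝ F] (a : ℝ)
    (f : EuclideanSpace ℝ (Fin n) → F) : Prop :=
  ∃ C : ℝ, 0 ≤ C ∧ ∀ y ∈ pball n, ∃ f' : EuclideanSpace ℝ (Fin n) →L[ℝ] F,
    HasFDerivWithinAt f f' (pball n) y ∧ ‖f y‖ ≤ C * ‖y‖ ^ a ∧ ‖f'‖ ≤ C * ‖y‖ ^ (a - 1)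

section
variable {n : ℕ} {F : Type} [NormedAddCommGroup F] [NormedSpace ℝ F]

theorem SymB.congr {a : ℝ} {f g : EuclideanSpace ℝ (Fin n) → F} (hf : SymB n a f)
    (h : ∀ y ∈ pball n, g y = f y) : SymB n a g := by
  obtain ⟨C, hC, H⟩ := hf
  refine ⟨C, hC, fun y hy => ?_⟩
  obtain ⟨f', h1, h2, h3⟩ := H y hy
  exact ⟨f', h1.congr h (h y hy), by rw [h y hy]; exact h2, h3⟩

theorem SymB.zero {a : ℝ} : SymB n a (fun _ => (0 : F)) :=
  ⟨0, le_rfl, fun y _ => ⟨0, hasFDerivWithinAt_const _ _ _, by simp, by simp⟩⟩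

theorem SymB.const (c : F) : SymB n 0 (fun _ => c) :=
  ⟨‖c‖, norm_nonneg _, fun y _ => ⟨0, hasFDerivWithinAt_const _ _ _, by simp, by
    rw [norm_zero]; positivity⟩⟩

theorem SymB.add {a : ℝ} {f g : EuclideanSpace ℝ (Fin n) → F} (hf : SymB n a f)
    (hg : SymB n a g) : SymB n a (fun y => f y + g y) := by
  obtain ⟨C, hC, H⟩ := hf
  obtain ⟨D, hD, G⟩ := hg
  refine ⟨C + D, by positivity, fun y hy => ?_⟩
  obtain ⟨f', h1, h2, h3⟩ := H y hy
  obtain ⟨g', k1, k2, k3⟩ := G y hy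
  refine ⟨f' + g', h1.add k1, ?_, ?_⟩
  · have := norm_add_le (f y) (g y)
    linarith
  · have := norm_add_le f' g'
    linarith

theorem SymB.sum {ι : Type} (s : Finset ι) {a : ℝ} {f : ι → EuclideanSpace ℝ (Fin n) → F}
    (hf : ∀ i ∈ s, SymB n a (f i)) : SymB n a (fun y => ∑ i ∈ s, f i y) := by
  classical
  induction s using Finset.induction_on with
  | empty => simpa using SymB.zero
  | insert i s hi ih =>
    refine ((hf i (by simp)).add (ih fun j hj => hf j (by simp [hj]))).congr ?_
    intro y _
    rw [Finset.sum_insert hi]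

theorem SymB.smul {a b : ℝ} {c : EuclideanSpace ℝ (Fin n) → ℝ}
    {f : EuclideanSpace ℝ (Fin n) → F} (hc : SymB n a c)
    (hf : SymB n b f) : SymB n (a + b) (fun y => c y • f y) := by
  obtain ⟨C, hC, H⟩ := hc
  obtain ⟨D, hD, G⟩ := hf
  refine ⟨2 * (C * D), by positivity, fun y hy => ?_⟩
  obtain ⟨c', h1, h2, h3⟩ := H y hy
  obtain ⟨f', k1, k2, k3⟩ := G y hy
  have hy0 : 0 < ‖y‖ := hy.1
  have e1 : ‖y‖ ^ (a + b) = ‖y‖ ^ a * ‖y‖ ^ b := Real.rpow_add hy0 _ _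
  have e2 : ‖y‖ ^ (a + b - 1) = ‖y‖ ^ a * ‖y‖ ^ (b - 1) := by
    rw [← Real.rpow_add hy0]; ring_nf
  have e3 : ‖y‖ ^ (a + b - 1) = ‖y‖ ^ (a - 1) * ‖y‖ ^ b := by
    rw [← Real.rpow_add hy0]; ring_nf
  refine ⟨_, h1.smul k1, ?_, ?_⟩
  · rw [norm_smul, e1]
    calc ‖c y‖ * ‖f y‖ ≤ (C * ‖y‖ ^ a) * (D * ‖y‖ ^ b) := by gcongr
      _ = 1 * (C * D * (‖y‖ ^ a * ‖y‖ ^ b)) := by ring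
      _ ≤ 2 * (C * D * (‖y‖ ^ a * ‖y‖ ^ b)) := by gcongr; norm_num
      _ = _ := by ring
  · have q1 : ‖c y • f'‖ ≤ C * D * ‖y‖ ^ (a + b - 1) := by
      rw [norm_smul, e2]
      calc ‖c y‖ * ‖f'‖ ≤ (C * ‖y‖ ^ a) * (D * ‖y‖ ^ (b - 1)) := by gcongr
        _ = _ := by ring
    have q2 : ‖c'.smulRight (f y)‖ ≤ C * D * ‖y‖ ^ (a + b - 1) := by
      rw [ContinuousLinearMap.norm_smulRight_apply, e3]
      calc ‖c'‖ * ‖f y‖ ≤ (C * ‖y‖ ^ (a - 1)) * (D * ‖y‖ ^ b) := by gcongr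
        _ = _ := by ring
    refine (norm_add_le _ _).trans ?_
    linarith

theorem SymB.mul {a b : ℝ} {c f : EuclideanSpace ℝ (Fin n) → ℝ} (hc : SymB n a c)
    (hf : SymB n b f) : SymB n (a + b) (fun y => c y * f y) := hc.smul hf

theorem hasFDerivAt_norm_rpow_aux (p : ℝ) (y : EuclideanSpace ℝ (Fin n)) (hy : 0 < ‖y‖) :
    HasFDerivAt (fun z : EuclideanSpace ℝ (Fin n) => ‖z‖ ^ p)
      ((p * ‖y‖ ^ (p - 2)) • innerSL ℝ y) y := by
  have h := (hasStrictFDerivAt_norm_sq y).hasFDerivAt.rpow_const (p := p / 2)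
    (Or.inl (by positivity))
  have e : ∀ (q : ℝ) (z : EuclideanSpace ℝ (Fin n)), (‖z‖ ^ 2) ^ q = ‖z‖ ^ (2 * q) := by
    intro q z
    rw [← Real.rpow_natCast, ← Real.rpow_mul (norm_nonneg _)]; norm_num
  simp only [e] at h
  have e2 : 2 * (p / 2) = p := by ring
  have e3 : 2 * (p / 2 - 1) = p - 2 := by ring
  rw [e2, e3] at h
  have e4 : (p * ‖y‖ ^ (p - 2)) • innerSL ℝ y =
      (p / 2 * ‖y‖ ^ (p - 2)) • 2 • innerSL ℝ y := by
    module
  rw [e4]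
  exact h

theorem SymB.norm_rpow (p : ℝ) :
    SymB n p (fun z : EuclideanSpace ℝ (Fin n) => ‖z‖ ^ p) := by
  refine ⟨|p| + 1, by positivity, fun y hy => ?_⟩
  have hy0 : 0 < ‖y‖ := hy.1
  refine ⟨_, (hasFDerivAt_norm_rpow_aux p y hy0).hasFDerivWithinAt, ?_, ?_⟩
  · rw [Real.norm_of_nonneg (by positivity)]
    have : 0 < ‖y‖ ^ p := by positivity
    nlinarith [abs_nonneg p]
  · rw [norm_smul, innerSL_apply_norm, norm_mul, Real.norm_eq_abs p,
      Real.norm_of_nonneg (by positivity : 0 ≤ ‖y‖ ^ (p - 2))]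
    have e : ‖y‖ ^ (p - 1) = ‖y‖ ^ (p - 2) * ‖y‖ := by
      rw [← Real.rpow_add_one hy0.ne']; ring_nf
    rw [e]
    have : 0 < ‖y‖ ^ (p - 2) * ‖y‖ := by positivity
    nlinarith

theorem SymB.id : SymB n 1 (fun z : EuclideanSpace ℝ (Fin n) => z) := by
  refine ⟨1, by positivity, fun y _ => ⟨_, hasFDerivWithinAt_id _ _, by simp, ?_⟩⟩
  simpa using ContinuousLinearMap.norm_id_le

theorem SymB.coord (i : Fin n) : SymB n 1 (fun z : EuclideanSpace ℝ (Fin n) => z i) := by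
  refine ⟨1, by positivity, fun y _ => ⟨_, (EuclideanSpace.proj (𝕜 := ℝ) i).hasFDerivWithinAt,
    ?_, ?_⟩⟩
  · simpa using PiLp.norm_apply_le y i
  · simp only [sub_self, Real.rpow_zero, mul_one]
    refine ContinuousLinearMap.opNorm_le_bound _ zero_le_one fun v => ?_
    simpa using PiLp.norm_apply_le v i

theorem SymB.dKelvin (i k : Fin n) : SymB n (-2) (fun z => dKelvin n z i k) := by
  have h1 := (SymB.const (n := n) (if i = k then (1 : ℝ) else 0)).mul (SymB.norm_rpow (-2))
  have h2 := (((SymB.const (n := n) (-2 : ℝ)).mul (SymB.coord i)).mul (SymB.coord k)).mul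
    (SymB.norm_rpow (-4))
  rw [show (0 : ℝ) + -2 = -2 by norm_num] at h1
  rw [show (0 : ℝ) + 1 + 1 + -4 = -2 by norm_num] at h2
  refine (h1.add h2).congr fun y _ => ?_
  unfold _root_.dKelvin
  ring

theorem SymB.kelvin : SymB n (-1) (kelvin n) := by
  have h := (SymB.norm_rpow (n := n) (-2)).smul SymB.id
  rw [show (-2 : ℝ) + 1 = -1 by norm_num] at h
  refine h.congr fun y _ => ?_
  unfold _root_.kelvin
  rw [Real.rpow_neg (norm_nonneg _)]
  norm_num

theorem norm_kelvin_aux (y : EuclideanSpace ℝ (Fin n)) (hy : 0 < ‖y‖) :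
    ‖kelvin n y‖ = ‖y‖⁻¹ := by
  unfold kelvin
  rw [norm_smul, norm_inv, norm_pow, norm_norm]
  field_simp

theorem SymB.sigma (τ C₀ : ℝ) (hC₀ : 0 < C₀)
    (σ : EuclideanSpace ℝ (Fin n) → Fin n → Fin n → ℝ)
    (hσC1 : ContDiffOn ℝ 1 σ {x : EuclideanSpace ℝ (Fin n) | 1 ≤ ‖x‖})
    (hσbd : ∀ x : EuclideanSpace ℝ (Fin n), 1 ≤ ‖x‖ → ‖σ x‖ ≤ C₀ * ‖x‖ ^ (-τ))
    (hσbd' : ∀ x : EuclideanSpace ℝ (Fin n), 1 ≤ ‖x‖ →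
      ‖fderivWithin ℝ σ {x : EuclideanSpace ℝ (Fin n) | 1 ≤ ‖x‖} x‖ ≤ C₀ * ‖x‖ ^ (-τ - 1)) :
    SymB n τ (fun z => σ (_root_.kelvin n z)) := by
  obtain ⟨C, hC, H⟩ := SymB.kelvin (n := n)
  have maps : Set.MapsTo (_root_.kelvin n) (pball n)
      {x : EuclideanSpace ℝ (Fin n) | 1 ≤ ‖x‖} := by
    intro z hz
    change 1 ≤ ‖_root_.kelvin n z‖
    rw [norm_kelvin_aux z hz.1]
    exact (one_le_inv₀ hz.1).2 hz.2
  refine ⟨C₀ * (C + 1), by positivity, fun y hy => ?_⟩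
  obtain ⟨K', h1, -, h3⟩ := H y hy
  have hy0 : 0 < ‖y‖ := hy.1
  have hK := maps hy
  have e : ∀ q : ℝ, ‖_root_.kelvin n y‖ ^ q = ‖y‖ ^ (-q) := by
    intro q
    rw [norm_kelvin_aux y hy0, Real.inv_rpow hy0.le, Real.rpow_neg hy0.le]
  have b1 := hσbd _ hK
  have b2 := hσbd' _ hK
  rw [e] at b1 b2
  have d := ((hσC1.differentiableOn one_ne_zero) _ hK).hasFDerivWithinAt
  refine ⟨_, d.comp y h1 maps, ?_, ?_⟩
  · refine b1.trans ?_
    rw [neg_neg]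
    have : 0 < ‖y‖ ^ τ := by positivity
    gcongr
    nlinarith
  · refine (ContinuousLinearMap.opNorm_comp_le _ _).trans ?_
    have e4 : ‖y‖ ^ (τ - 1) = ‖y‖ ^ (-(-τ - 1)) * ‖y‖ ^ (-1 - 1 : ℝ) := by
      rw [← Real.rpow_add hy0]; ring_nf
    rw [e4]
    calc _ ≤ (C₀ * ‖y‖ ^ (-(-τ - 1))) * (C * ‖y‖ ^ (-1 - 1 : ℝ)) := by gcongr
      _ = C₀ * C * (‖y‖ ^ (-(-τ - 1)) * ‖y‖ ^ (-1 - 1 : ℝ)) := by ring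
      _ ≤ _ := by gcongr; linarith

theorem SymB.apply {m : ℕ} {G : Type} [NormedAddCommGroup G] [NormedSpace ℝ G] {a : ℝ}
    {f : EuclideanSpace ℝ (Fin n) → Fin m → G}
    (hf : SymB n a f) (i : Fin m) : SymB n a (fun y => f y i) := by
  obtain ⟨C, hC, H⟩ := hf
  refine ⟨C, hC, fun y hy => ?_⟩
  obtain ⟨f', h1, h2, h3⟩ := H y hy
  refine ⟨(ContinuousLinearMap.proj i).comp f', (hasFDerivWithinAt_pi'.1 h1) i,
    (norm_le_pi_norm _ i).trans h2, le_trans ?_ h3⟩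
  refine ContinuousLinearMap.opNorm_le_bound _ (norm_nonneg _) fun v => ?_
  exact (norm_le_pi_norm (f' v) i).trans (f'.le_opNorm v)

theorem dKelvin_orth (y : EuclideanSpace ℝ (Fin n)) (hy : 0 < ‖y‖) (i j : Fin n) :
    ∑ k, dKelvin n y i k * dKelvin n y j k = (if i = j then (1 : ℝ) else 0) * ‖y‖ ^ (-4 : ℝ) := by
  have hs : ∑ k, y k * y k = ‖y‖ ^ 2 := by
    rw [EuclideanSpace.norm_sq_eq]
    exact Finset.sum_congr rfl fun k _ => by rw [Real.norm_eq_abs, sq_abs, sq]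
  have e2 : ‖y‖ ^ (-2 : ℝ) = (‖y‖ ^ 2)⁻¹ := by
    rw [Real.rpow_neg hy.le]; norm_num
  have e4 : ‖y‖ ^ (-4 : ℝ) = (‖y‖ ^ 4)⁻¹ := by
    rw [Real.rpow_neg hy.le]
    norm_cast
  unfold dKelvin
  rw [e2, e4]
  have : ∀ k, ((if i = k then (1 : ℝ) else 0) * (‖y‖ ^ 2)⁻¹ - 2 * y i * y k * (‖y‖ ^ 4)⁻¹) *
      ((if j = k then (1 : ℝ) else 0) * (‖y‖ ^ 2)⁻¹ - 2 * y j * y k * (‖y‖ ^ 4)⁻¹)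
      = (if i = k then (if j = k then ((‖y‖ ^ 2)⁻¹) ^ 2 else 0) else 0)
        - (if i = k then 2 * y j * y k * (‖y‖ ^ 4)⁻¹ * (‖y‖ ^ 2)⁻¹ else 0)
        - (if j = k then 2 * y i * y k * (‖y‖ ^ 4)⁻¹ * (‖y‖ ^ 2)⁻¹ else 0)
        + 4 * y i * y j * ((‖y‖ ^ 4)⁻¹) ^ 2 * (y k * y k) := by
    intro k
    split_ifs <;> ring
  rw [Finset.sum_congr rfl fun k _ => this k]
  rw [Finset.sum_add_distrib, Finset.sum_sub_distrib, Finset.sum_sub_distrib, ← Finset.mul_sum, hs]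
  simp only [Finset.sum_ite_eq, Finset.mem_univ, if_true]
  by_cases hij : i = j
  · subst hij
    simp only [if_true]
    field_simp
    ring
  · simp only [hij, Ne.symm hij, if_false]
    field_simp
    ring

theorem uniqueDiff_pball {y : EuclideanSpace ℝ (Fin n)} (hy : y ∈ pball n) :
    UniqueDiffWithinAt ℝ (pball n) y := by
  have h : UniqueDiffWithinAt ℝ (Metric.closedBall (0 : EuclideanSpace ℝ (Fin n)) 1) y := by
    refine uniqueDiffOn_convex (convex_closedBall _ _) ?_ y (by simpa using hy.2)
    exact ⟨0, Metric.ball_subset_interior_closedBall (by simp)⟩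
  have ho : {z : EuclideanSpace ℝ (Fin n) | 0 < ‖z‖} ∈ nhds y :=
    (isOpen_lt continuous_const continuous_norm).mem_nhds hy.1
  refine (h.inter ho).mono ?_
  rintro z ⟨h1, h2⟩
  exact ⟨h2, by simpa using h1⟩

end

/-- if `σ` is a `C¹` symmetric-matrix-valued map on `{|x| ≥ 1}` with
`‖σ(x)‖ ≤ C₀ |x|^{-τ}` and `‖Dσ(x)‖ ≤ C₀ |x|^{-τ-1}`, then the partial derivatives of the
pulled-back metric components satisfy
`|∂_k h_{ij}(y) + 4 |y|^{-5} (y_k/|y|) δ_{ij}| ≤ C |y|^{τ-5}` on the punctured unit ball. -/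
theorem kelvin_pulled_metric_derivative_estimate (n : ℕ) (hn : 3 ≤ n) (τ C₀ : ℝ) (hτ : 0 < τ)
    (hC₀ : 0 < C₀) (σ : EuclideanSpace ℝ (Fin n) → Fin n → Fin n → ℝ)
    (hσC1 : ContDiffOn ℝ 1 σ {x : EuclideanSpace ℝ (Fin n) | 1 ≤ ‖x‖})
    (hσsymm : ∀ x : EuclideanSpace ℝ (Fin n), 1 ≤ ‖x‖ → ∀ i j, σ x i j = σ x j i)
    (hσbd : ∀ x : EuclideanSpace ℝ (Fin n), 1 ≤ ‖x‖ → ‖σ x‖ ≤ C₀ * ‖x‖ ^ (-τ))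
    (hσbd' : ∀ x : EuclideanSpace ℝ (Fin n), 1 ≤ ‖x‖ →
      ‖fderivWithin ℝ σ {x : EuclideanSpace ℝ (Fin n) | 1 ≤ ‖x‖} x‖ ≤ C₀ * ‖x‖ ^ (-τ - 1)) :
    ∃ C > 0, ∀ y : EuclideanSpace ℝ (Fin n), 0 < ‖y‖ → ‖y‖ ≤ 1 → ∀ i j k : Fin n,
      |fderivWithin ℝ (fun z => pulledMetric n σ z i j)
          {z : EuclideanSpace ℝ (Fin n) | 0 < ‖z‖ ∧ ‖z‖ ≤ 1} y (EuclideanSpace.single k 1)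
        + 4 * ‖y‖ ^ (-(5 : ℝ)) * (y k / ‖y‖) * (if i = j then (1 : ℝ) else 0)|
        ≤ C * ‖y‖ ^ (τ - 5) := by
  have hR : ∀ i j, SymB n (τ - 4) (fun z => ∑ k, ∑ l, dKelvin n z i k * dKelvin n z j l *
      σ (kelvin n z) k l) := by
    intro i j
    refine SymB.sum _ fun k _ => SymB.sum _ fun l _ => ?_
    have h := ((SymB.dKelvin i k).mul (SymB.dKelvin j l)).mul
      (((SymB.sigma τ C₀ hC₀ σ hσC1 hσbd hσbd').apply k).apply l)
    rwa [show (-2 : ℝ) + -2 + τ = τ - 4 by ring] at h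
  choose C hC H using hR
  have hCs : ∀ i j, C i j ≤ ∑ a, ∑ b, C a b := fun i j =>
    (Finset.single_le_sum (f := fun b => C i b) (fun b _ => hC i b) (Finset.mem_univ j)).trans
      (Finset.single_le_sum (f := fun a => ∑ b, C a b)
        (fun a _ => Finset.sum_nonneg fun b _ => hC a b) (Finset.mem_univ i))
  have hS0 : 0 ≤ ∑ a, ∑ b, C a b :=
    Finset.sum_nonneg fun a _ => Finset.sum_nonneg fun b _ => hC a b
  refine ⟨∑ a, ∑ b, C a b + 1, by positivity, fun y hy0 hy1 i j k => ?_⟩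
  have hy : y ∈ pball n := ⟨hy0, hy1⟩
  obtain ⟨R', h1, -, h3⟩ := H i j y hy
  have key : ∀ z ∈ pball n, pulledMetric n σ z i j =
      (if i = j then (1 : ℝ) else 0) * ‖z‖ ^ (-4 : ℝ) +
        ∑ k, ∑ l, dKelvin n z i k * dKelvin n z j l * σ (kelvin n z) k l := by
    intro z hz
    rw [← dKelvin_orth z hz.1 i j]
    unfold pulledMetric
    rw [← Finset.sum_add_distrib]
    refine Finset.sum_congr rfl fun k _ => ?_
    simp only [mul_add, Finset.sum_add_distrib]
    simp
  have hM := ((hasFDerivAt_norm_rpow_aux (-4) y hy0).const_mul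
    (if i = j then (1 : ℝ) else 0)).hasFDerivWithinAt (s := pball n)
  have hT := (hM.add h1).congr key (key y hy)
  change |fderivWithin ℝ (fun z => pulledMetric n σ z i j) (pball n) y _ + _| ≤ _
  rw [hT.fderivWithin (uniqueDiff_pball hy)]
  have e6 : ‖y‖ ^ (-5 : ℝ) = ‖y‖ ^ (-4 - 2 : ℝ) * ‖y‖ := by
    rw [← Real.rpow_add_one hy0.ne']; norm_num
  have hin : innerSL ℝ y (EuclideanSpace.single k (1 : ℝ)) = y k := by
    simp [innerSL_apply_apply, EuclideanSpace.inner_single_right]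
  have heq : (((if i = j then (1 : ℝ) else 0) • ((-4 * ‖y‖ ^ (-4 - 2 : ℝ)) • innerSL ℝ y)) + R')
      (EuclideanSpace.single k 1) + 4 * ‖y‖ ^ (-(5 : ℝ)) * (y k / ‖y‖) *
        (if i = j then (1 : ℝ) else 0) = R' (EuclideanSpace.single k 1) := by
    simp only [ContinuousLinearMap.add_apply, ContinuousLinearMap.smul_apply, hin, smul_eq_mul]
    rw [e6]
    field_simp
    ring
  rw [heq, ← Real.norm_eq_abs]
  have h5 := R'.le_opNorm (EuclideanSpace.single k (1 : ℝ))
  rw [EuclideanSpace.norm_single, norm_one, mul_one] at h5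
  rw [show τ - 4 - 1 = τ - 5 by ring] at h3
  refine (h5.trans h3).trans ?_
  gcongr
  linarith [hCs i j]
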